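/- (Claim 2) Let a ∈ {1,...,K−1}, b = a+1, and suppose q_a ≤ 1 < q_b. Fix j ≥ b with q_j > 1. Then among the intersection points p(i,j) for i ∈ {1,...,a}, the LP objective f is maximized at i = a: for every i with 1 ≤ i ≤ a, f(p(a,j)) ≥ f(p(i,j)). -/

import Mathlib

/-- Transmission cost per placement of a type-`t` subfile: `c_t = ρ·t^α`. -/
noncomputable def cCost (ρ α : ℝ) (t : ℕ) : ℝ := ρ * (t : ℝ) ^ α

/-- `q_t = (N·c_t·(t+1) + t·(K+1)) / (K·(t+1))`. -/
noncomputable def q (K N : ℕ) (ρ α : ℝ) (t : ℕ) : ℝ :=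
  ((N : ℝ) * cCost ρ α t * ((t : ℝ) + 1) + (t : ℝ) * ((K : ℝ) + 1)) /
    ((K : ℝ) * ((t : ℝ) + 1))

/-- Feasibility for the caching LP: `Σ_{t=1}^K q_t·y_t ≤ 1`, `Σ_{t=1}^K y_t ≤ 1`,
and `y_t ≥ 0` for all `t ∈ {1,…,K}`. -/
def Feasible (K N : ℕ) (ρ α : ℝ) (y : ℕ → ℝ) : Prop :=
  (∑ t ∈ Finset.Icc 1 K, q K N ρ α t * y t ≤ 1) ∧
  (∑ t ∈ Finset.Icc 1 K, y t ≤ 1) ∧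
  (∀ t ∈ Finset.Icc 1 K, 0 ≤ y t)

/-- The caching LP objective `f(y) = Σ_{t=1}^K (t/(t+1))·y_t`. -/
noncomputable def objF (K : ℕ) (y : ℕ → ℝ) : ℝ :=
  ∑ t ∈ Finset.Icc 1 K, ((t : ℝ) / ((t : ℝ) + 1)) * y t

/-- The intersection point `p(i,j)`: `y_i = (q_j − 1)/(q_j − q_i)`,
`y_j = (1 − q_i)/(q_j − q_i)`, and `y_t = 0` otherwise. -/
noncomputable def pInter (K N : ℕ) (ρ α : ℝ) (i j : ℕ) : ℕ → ℝ := fun t =>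
  if t = i then (q K N ρ α j - 1) / (q K N ρ α j - q K N ρ α i)
  else if t = j then (1 - q K N ρ α i) / (q K N ρ α j - q K N ρ α i)
  else 0

/-- A lower bound for the increment of `log` by the tangent line in the variable `t / (t + 1)`. -/
lemma log_div_ge_of_one_le {x y : ℝ} (hx : 1 ≤ x) (hy : 1 ≤ y) :
    (y + 1) * (x - y) / (y * (x + 1)) ≤ Real.log (x / y) := by
  have hx0 : 0 < x := by linarith
  have hy0 : 0 < y := by linarith
  rcases le_total y x with h | h
  · have hlog := Real.le_log_one_add_of_nonneg (x := (x - y) / y)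
      (div_nonneg (by linarith) hy0.le)
    have hxy : 1 + (x - y) / y = x / y := by field_simp; ring
    rw [hxy] at hlog
    refine le_trans ?_ hlog
    have hrw : 2 * ((x - y) / y) / ((x - y) / y + 2) = 2 * (x - y) / (x + y) := by
      field_simp
      ring
    rw [hrw, div_le_div_iff₀ (by positivity) (by positivity)]
    nlinarith [mul_nonneg (mul_nonneg (sub_nonneg.2 h) (sub_nonneg.2 h)) (sub_nonneg.2 hy)]
  · have hsinh : Real.log (y / x) ≤ Real.sinh (Real.log (y / x)) :=
      Real.self_le_sinh_iff.2 (Real.log_nonneg ((one_le_div hx0).2 h))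
    rw [Real.sinh_log (by positivity)] at hsinh
    have hneg : Real.log (x / y) = -Real.log (y / x) := by
      rw [← Real.log_inv, inv_div]
    rw [hneg, le_neg]
    refine hsinh.trans ?_
    have hl : (y / x - (y / x)⁻¹) / 2 = (y - x) * (y + x) / (2 * x * y) := by
      field_simp
      ring
    have hr : -((y + 1) * (x - y) / (y * (x + 1))) = (y + 1) * (y - x) / (y * (x + 1)) := by
      ring
    rw [hl, hr, div_le_div_iff₀ (by positivity) (by positivity)]
    nlinarith [mul_nonneg (mul_nonneg hy0.le (mul_nonneg (sub_nonneg.2 h) (sub_nonneg.2 h)))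
      (sub_nonneg.2 hx)]

/-- On `[1, ∞)`, `t ^ α` lies above its tangent lines in the variable `t / (t + 1)`. -/
lemma rpow_sub_rpow_ge_tangent {α x y : ℝ} (hα : 0 ≤ α) (hx : 1 ≤ x) (hy : 1 ≤ y) :
    α * y ^ α * ((y + 1) ^ 2 / y) * (x / (x + 1) - y / (y + 1)) ≤ x ^ α - y ^ α := by
  have hx0 : 0 < x := by linarith
  have hy0 : 0 < y := by linarith
  have hP : 0 ≤ y ^ α := Real.rpow_nonneg hy0.le α
  have hexp : 1 + α * Real.log (x / y) ≤ (x / y) ^ α := by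
    rw [Real.rpow_def_of_pos (by positivity)]
    linarith [Real.add_one_le_exp (Real.log (x / y) * α)]
  have hsplit : x ^ α = y ^ α * (x / y) ^ α := by
    rw [← Real.mul_rpow hy0.le (by positivity), mul_div_cancel₀ _ hy0.ne']
  have hlog := mul_le_mul_of_nonneg_left (log_div_ge_of_one_le hx hy) hα
  have hmul := mul_le_mul_of_nonneg_left ((add_le_add_right hlog 1).trans hexp) hP
  have hrw : α * y ^ α * ((y + 1) ^ 2 / y) * (x / (x + 1) - y / (y + 1)) =
      y ^ α * (α * ((y + 1) * (x - y) / (y * (x + 1)))) := by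
    field_simp
    ring
  rw [hrw, hsplit]
  linarith

lemma div_add_one_lt_div_add_one {x y : ℝ} (hx : 0 ≤ x) (hxy : x < y) :
    x / (x + 1) < y / (y + 1) := by
  rw [div_lt_div_iff₀ (by linarith) (by linarith)]
  linarith

/-- Slope inequality expressing convexity of `t ^ α` in the variable `t / (t + 1)`. -/
lemma rpow_slope_le {α x y z : ℝ} (hα : 0 ≤ α) (hx : 1 ≤ x) (hxy : x < y) (hyz : y < z) :
    (y ^ α - x ^ α) * (z / (z + 1) - y / (y + 1)) ≤
      (z ^ α - y ^ α) * (y / (y + 1) - x / (x + 1)) := by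
  have hy : 1 ≤ y := hx.trans hxy.le
  have h₁ := rpow_sub_rpow_ge_tangent hα hx hy
  have h₂ := rpow_sub_rpow_ge_tangent hα (hy.trans hyz.le) hy
  have g₁ := div_add_one_lt_div_add_one (by linarith) hxy
  have g₂ := div_add_one_lt_div_add_one (by linarith) hyz
  have m₁ := mul_le_mul_of_nonneg_right h₁ (sub_nonneg.2 g₂.le)
  have m₂ := mul_le_mul_of_nonneg_right h₂ (sub_nonneg.2 g₁.le)
  linarith

lemma q_eq {K : ℕ} (hK : K ≠ 0) (N : ℕ) (ρ α : ℝ) (t : ℕ) :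
    q K N ρ α t = N * ρ / K * (t : ℝ) ^ α + (K + 1) / K * (t / (t + 1)) := by
  have : (K : ℝ) ≠ 0 := by exact_mod_cast hK
  have : (t : ℝ) + 1 ≠ 0 := by positivity
  unfold q cCost
  field_simp

lemma q_lt_q {K : ℕ} (hK : K ≠ 0) (N : ℕ) {ρ α : ℝ} (hα : 0 ≤ α) (hρ : 0 ≤ ρ) {s t : ℕ}
    (hst : s < t) : q K N ρ α s < q K N ρ α t := by
  have hK' : (0 : ℝ) < K := by exact_mod_cast Nat.pos_of_ne_zero hK
  have hst' : (s : ℝ) < t := by exact_mod_cast hst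
  rw [q_eq hK, q_eq hK]
  have h₁ := Real.rpow_le_rpow s.cast_nonneg hst'.le hα
  have h₂ := div_add_one_lt_div_add_one s.cast_nonneg hst'
  exact add_lt_add_of_le_of_lt (mul_le_mul_of_nonneg_left h₁ (by positivity))
    (mul_lt_mul_of_pos_left h₂ (by positivity))

lemma objF_pInter (K N : ℕ) (ρ α : ℝ) {i j : ℕ} (hi : 1 ≤ i) (hij : i < j) (hj : j ≤ K) :
    objF K (pInter K N ρ α i j) =
      ((i : ℝ) / (i + 1) * (q K N ρ α j - 1) + (j : ℝ) / (j + 1) * (1 - q K N ρ α i)) /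
        (q K N ρ α j - q K N ρ α i) := by
  unfold objF
  rw [Finset.sum_eq_add_of_mem i j (Finset.mem_Icc.2 ⟨hi, by omega⟩)
    (Finset.mem_Icc.2 ⟨by omega, hj⟩) hij.ne]
  · simp only [pInter, if_true, if_neg hij.ne']
    ring
  · rintro t - ⟨h₁, h₂⟩
    simp [pInter, h₁, h₂]

theorem claim2_intersection_maximized_at_a
    (K N : ℕ) (hK : 2 ≤ K) (hKN : K ≤ N) (α ρ : ℝ)
    (hα0 : 0 ≤ α) (hα1 : α ≤ 1) (hρ0 : 0 ≤ ρ) (hρ1 : ρ ≤ 1)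
    (a : ℕ) (ha : 1 ≤ a) (haK : a + 1 ≤ K)
    (hqa : q K N ρ α a ≤ 1) (hqb : 1 < q K N ρ α (a + 1))
    (j : ℕ) (hj : a + 1 ≤ j) (hjK : j ≤ K) (hqj : 1 < q K N ρ α j) :
    ∀ i : ℕ, 1 ≤ i → i ≤ a →
      objF K (pInter K N ρ α i j) ≤ objF K (pInter K N ρ α a j) := by
  intro i hi hia
  rcases hia.eq_or_lt with rfl | hia
  · exact le_rfl
  have hK0 : K ≠ 0 := by omega
  have hja := q_lt_q hK0 N hα0 hρ0 (show a < j by omega)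
  have hji := q_lt_q hK0 N hα0 hρ0 (show i < j by omega)
  rw [objF_pInter K N ρ α hi (by omega) hjK, objF_pInter K N ρ α ha (by omega) hjK,
    div_le_div_iff₀ (sub_pos.2 hji) (sub_pos.2 hja)]
  have hslope := rpow_slope_le (x := i) (y := a) (z := j) hα0 (by exact_mod_cast hi)
    (by exact_mod_cast hia) (by exact_mod_cast hj)
  have hC : (0 : ℝ) ≤ N * ρ / K := by positivity
  have hbracket : ((j : ℝ) / (j + 1) - a / (a + 1)) * (q K N ρ α j - q K N ρ α i) ≤
      ((j : ℝ) / (j + 1) - i / (i + 1)) * (q K N ρ α j - q K N ρ α a) := by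
    simp only [q_eq hK0]
    linarith [mul_le_mul_of_nonneg_left hslope hC]
  linarith [mul_le_mul_of_nonneg_left hbracket (sub_nonneg.2 hqj.le)]
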